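/- Let Φ : L(X) → L(Y) with dim(Y) = 1, so there is a unique operator A ∈ L(X) with Φ(X) = ⟨A, X⟩ for all X (where ⟨A,X⟩ = tr(A*X)). Then the diamond norm of Φ equals the operator norm of A: sup over finite-dimensional W and unit-trace-norm operators ρ on X ⊗ W of ‖(Φ ⊗ id_W)(ρ)‖₁ equals ‖A‖. -/

import Mathlib

open Matrix
open scoped ComplexOrder

/-- The trace norm (sum of singular values) of a complex matrix. -/
noncomputable def traceNorm {n : Type*} [Fintype n] [DecidableEq n]
    (A : Matrix n n ℂ) : ℝ :=
  ∑ i, Real.sqrt ((Matrix.posSemidef_conjTranspose_mul_self A).isHermitian.eigenvalues i)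

/-- The operator (spectral) norm of a complex matrix. -/
noncomputable def opNorm {n : Type*} [Fintype n] [DecidableEq n] (A : Matrix n n ℂ) : ℝ :=
  ‖Matrix.toEuclideanCLM (𝕜 := ℂ) A‖

/-- `(Φ ⊗ id_W)(ξ)` for the scalar-output super-operator `Φ(X) = tr(Aᴴ X)`:
the operator on `W` obtained by applying `Φ` blockwise. -/
noncomputable def phiTensorIdApply {dx dw : ℕ} (A : Matrix (Fin dx) (Fin dx) ℂ)
    (ξ : Matrix (Fin dx × Fin dw) (Fin dx × Fin dw) ℂ) :
    Matrix (Fin dw) (Fin dw) ℂ :=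
  Matrix.of fun w w' => ∑ x' : Fin dx, ∑ x : Fin dx, star (A x' x) * ξ (x', w) (x, w')

section TraceNormAux

open scoped Matrix.Norms.L2Operator Kronecker

/-- Spectral data of `Bᴴ * B`. -/
lemma traceNorm_data {n : Type*} [Fintype n] [DecidableEq n] (B : Matrix n n ℂ) :
    ∃ (V : Matrix n n ℂ) (l : n → ℝ), V ∈ unitary (Matrix n n ℂ) ∧ Vᴴ * V = 1 ∧ V * Vᴴ = 1 ∧
      (∀ i, 0 ≤ l i) ∧ Bᴴ * B = V * diagonal (fun i => (l i : ℂ)) * Vᴴ ∧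
      traceNorm B = ∑ i, Real.sqrt (l i) := by
  have hp := Matrix.posSemidef_conjTranspose_mul_self B
  refine ⟨hp.isHermitian.eigenvectorUnitary, hp.isHermitian.eigenvalues,
    hp.isHermitian.eigenvectorUnitary.2, ?_, ?_, hp.eigenvalues_nonneg, ?_, rfl⟩
  · exact Unitary.coe_star_mul_self hp.isHermitian.eigenvectorUnitary
  · exact Unitary.coe_mul_star_self hp.isHermitian.eigenvectorUnitary
  · have h := hp.isHermitian.spectral_theorem
    rw [Unitary.conjStarAlgAut_apply] at h
    exact h

lemma traceNorm_nonneg' {n : Type*} [Fintype n] [DecidableEq n] (B : Matrix n n ℂ) :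
    0 ≤ traceNorm B := Finset.sum_nonneg fun _ _ => Real.sqrt_nonneg _

/-- The trace norm is attained by a contraction. -/
lemma traceNorm_attained {n : Type*} [Fintype n] [DecidableEq n] (B : Matrix n n ℂ) :
    ∃ U : Matrix n n ℂ, ‖U‖ ≤ 1 ∧ (U * B).trace = (traceNorm B : ℂ) := by
  obtain ⟨V, l, hV, h1, h2, hl, hB, ht⟩ := traceNorm_data B
  set E : Matrix n n ℂ := diagonal (fun i => (((Real.sqrt (l i))⁻¹ : ℝ) : ℂ)) with hE
  have hEh : Eᴴ = E := by
    rw [hE, diagonal_conjTranspose]; congr 1; ext i; simp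
  refine ⟨V * E * Vᴴ * Bᴴ, ?_, ?_⟩
  · set U := V * E * Vᴴ * Bᴴ with hU
    have hUU : U * Uᴴ = V * (E * diagonal (fun i => (l i : ℂ)) * E) * Vᴴ := by
      have : U * Uᴴ = V * E * Vᴴ * (Bᴴ * B) * (V * E * Vᴴ) := by
        simp only [hU, conjTranspose_mul, conjTranspose_conjTranspose, hEh, Matrix.mul_assoc]
      rw [this, hB]
      calc _ = V * E * (Vᴴ * V) * diagonal (fun i => (l i : ℂ)) * (Vᴴ * V) * E * Vᴴ := by
            simp only [Matrix.mul_assoc]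
        _ = _ := by rw [h1]; simp only [Matrix.mul_assoc, Matrix.one_mul, Matrix.mul_one]
    have hn : ‖U‖ * ‖U‖ ≤ 1 := by
      rw [← CStarRing.norm_self_mul_star, star_eq_conjTranspose, hUU,
        ← star_eq_conjTranspose V,
        CStarRing.norm_mul_mem_unitary _ (Unitary.star_mem hV),
        CStarRing.norm_mem_unitary_mul _ hV, hE, diagonal_mul_diagonal, diagonal_mul_diagonal,
        l2_opNorm_diagonal]
      refine (pi_norm_le_iff_of_nonneg zero_le_one).2 fun i => ?_
      rw [← Complex.ofReal_mul, ← Complex.ofReal_mul, Complex.norm_real]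
      have hs := Real.mul_self_sqrt (hl i)
      by_cases h0 : Real.sqrt (l i) = 0
      · simp [h0]
      · have : (Real.sqrt (l i))⁻¹ * l i * (Real.sqrt (l i))⁻¹ = 1 := by
          field_simp; nlinarith
        rw [this]; simp
    nlinarith [norm_nonneg U]
  · rw [Matrix.mul_assoc _ Bᴴ B, hB, ht]
    have : V * E * Vᴴ * (V * diagonal (fun i => (l i : ℂ)) * Vᴴ)
        = V * (E * diagonal (fun i => (l i : ℂ))) * Vᴴ := by
      calc _ = V * E * (Vᴴ * V) * diagonal (fun i => (l i : ℂ)) * Vᴴ := by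
            simp only [Matrix.mul_assoc]
        _ = _ := by rw [h1]; simp only [Matrix.mul_assoc, Matrix.one_mul]
    rw [this, trace_mul_comm, ← Matrix.mul_assoc, h1, Matrix.one_mul, hE, diagonal_mul_diagonal,
      trace_diagonal, Complex.ofReal_sum]
    refine Finset.sum_congr rfl fun i _ => ?_
    rw [← Complex.ofReal_mul]
    congr 1
    have hs := Real.mul_self_sqrt (hl i)
    by_cases h0 : Real.sqrt (l i) = 0
    · simp [h0]
    · field_simp; nlinarith

/-- Hölder inequality for the trace norm and operator norm. -/
lemma trace_mul_le {n : Type*} [Fintype n] [DecidableEq n] (C B : Matrix n n ℂ) :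
    ‖(C * B).trace‖ ≤ ‖C‖ * traceNorm B := by
  obtain ⟨V, l, hV, h1, h2, hl, hB, ht⟩ := traceNorm_data B
  have e : (C * B).trace = ((Vᴴ * C) * (B * V)).trace := by
    rw [Matrix.mul_assoc, trace_mul_comm Vᴴ]
    rw [← Matrix.mul_assoc C, Matrix.mul_assoc _ V, h2, Matrix.mul_one]
  have hN : (B * V)ᴴ * (B * V) = diagonal (fun i => (l i : ℂ)) := by
    calc _ = Vᴴ * (Bᴴ * B) * V := by simp only [conjTranspose_mul, Matrix.mul_assoc]
      _ = (Vᴴ * V) * diagonal (fun i => (l i : ℂ)) * (Vᴴ * V) := by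
        rw [hB]; simp only [Matrix.mul_assoc]
      _ = _ := by rw [h1, Matrix.one_mul, Matrix.mul_one]
  have hM : ‖Vᴴ * C‖ = ‖C‖ := by
    rw [← star_eq_conjTranspose, CStarRing.norm_mem_unitary_mul _ (Unitary.star_mem hV)]
  rw [e, ht, Finset.mul_sum, ← hM]
  refine (norm_sum_le _ _).trans (Finset.sum_le_sum fun i _ => ?_)
  generalize Vᴴ * C = M at *
  generalize B * V = N at *
  have hc : ‖WithLp.toLp 2 (N.col i)‖ = Real.sqrt (l i) := by
    rw [EuclideanSpace.norm_eq]
    congr 1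
    have := congrFun (congrFun hN i) i
    rw [diagonal_apply_eq, Matrix.mul_apply] at this
    apply Complex.ofReal_injective
    rw [← this]
    push_cast
    refine Finset.sum_congr rfl fun j _ => ?_
    simp only [conjTranspose_apply, Matrix.col_apply]
    rw [← Complex.conj_mul']; rfl
  have h3 := l2_opNorm_mulVec M (WithLp.toLp 2 (N.col i))
  rw [hc] at h3
  refine le_trans ?_ h3
  exact PiLp.norm_apply_le (WithLp.toLp 2 (M *ᵥ N.col i)) i

lemma norm_kron_one {m n : Type*} [Fintype m] [DecidableEq m] [Fintype n] [DecidableEq n]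
    (A : Matrix m m ℂ) : ‖A ⊗ₖ (1 : Matrix n n ℂ)‖ ≤ ‖A‖ := by
  let φ : Matrix m m ℂ →⋆ₙₐ[ℂ] Matrix (m × n) (m × n) ℂ :=
    { toFun := fun A => A ⊗ₖ (1 : Matrix n n ℂ)
      map_smul' := fun r x => smul_kronecker _ _ _
      map_zero' := zero_kronecker _
      map_add' := fun x y => add_kronecker _ _ _
      map_mul' := fun x y => by rw [← mul_kronecker_mul, Matrix.mul_one]
      map_star' := fun x => by
        simp only [star_eq_conjTranspose, conjTranspose_kronecker, conjTranspose_one] }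
  exact NonUnitalStarAlgHom.norm_apply_le φ A

lemma norm_one_kron {m n : Type*} [Fintype m] [DecidableEq m] [Fintype n] [DecidableEq n]
    (A : Matrix m m ℂ) : ‖(1 : Matrix n n ℂ) ⊗ₖ A‖ ≤ ‖A‖ := by
  let φ : Matrix m m ℂ →⋆ₙₐ[ℂ] Matrix (n × m) (n × m) ℂ :=
    { toFun := fun A => (1 : Matrix n n ℂ) ⊗ₖ A
      map_smul' := fun r x => kronecker_smul _ _ _
      map_zero' := kronecker_zero _
      map_add' := fun x y => kronecker_add _ _ _
      map_mul' := fun x y => by rw [← mul_kronecker_mul, Matrix.mul_one]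
      map_star' := fun x => by
        simp only [star_eq_conjTranspose, conjTranspose_kronecker, conjTranspose_one] }
  exact NonUnitalStarAlgHom.norm_apply_le φ A

lemma norm_kron_le {m n : Type*} [Fintype m] [DecidableEq m] [Fintype n] [DecidableEq n]
    (A : Matrix m m ℂ) (U : Matrix n n ℂ) : ‖A ⊗ₖ U‖ ≤ ‖A‖ * ‖U‖ := by
  have : A ⊗ₖ U = (A ⊗ₖ (1 : Matrix n n ℂ)) * ((1 : Matrix m m ℂ) ⊗ₖ U) := by
    rw [← mul_kronecker_mul, Matrix.mul_one, Matrix.one_mul]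
  rw [this]
  exact (norm_mul_le _ _).trans
    (mul_le_mul (norm_kron_one A) (norm_one_kron U) (norm_nonneg _) (norm_nonneg _))

lemma trace_phi {dx dw : ℕ} (A : Matrix (Fin dx) (Fin dx) ℂ)
    (ξ : Matrix (Fin dx × Fin dw) (Fin dx × Fin dw) ℂ) (U : Matrix (Fin dw) (Fin dw) ℂ) :
    (U * phiTensorIdApply A ξ).trace = ((Aᴴ ⊗ₖ U) * ξ).trace := by
  simp only [Matrix.trace, Matrix.diag_apply, Matrix.mul_apply, phiTensorIdApply, Matrix.of_apply,
    Fintype.sum_prod_type, kroneckerMap_apply, conjTranspose_apply, Finset.mul_sum]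
  conv_rhs => rw [Finset.sum_comm]
  refine Finset.sum_congr rfl fun w' _ => ?_
  conv_lhs => rw [Finset.sum_comm]
  conv_rhs => rw [Finset.sum_comm]
  refine Finset.sum_congr rfl fun x' _ => ?_
  conv_lhs => rw [Finset.sum_comm]
  refine Finset.sum_congr rfl fun x _ => ?_
  refine Finset.sum_congr rfl fun w _ => ?_
  ring

lemma phi_le {dx dw : ℕ} (A : Matrix (Fin dx) (Fin dx) ℂ)
    (ξ : Matrix (Fin dx × Fin dw) (Fin dx × Fin dw) ℂ) :
    traceNorm (phiTensorIdApply A ξ) ≤ opNorm A * traceNorm ξ := by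
  obtain ⟨U, hU, ht⟩ := traceNorm_attained (phiTensorIdApply A ξ)
  rw [trace_phi] at ht
  have h := trace_mul_le (Aᴴ ⊗ₖ U) ξ
  rw [ht, Complex.norm_real, Real.norm_of_nonneg (traceNorm_nonneg' _)] at h
  refine h.trans (mul_le_mul_of_nonneg_right ?_ (traceNorm_nonneg' _))
  have h2 := norm_kron_le Aᴴ U
  rw [l2_opNorm_conjTranspose] at h2
  have : opNorm A = ‖A‖ := rfl
  rw [this]
  nlinarith [norm_nonneg A]

lemma traceNorm_of_idem {n : Type*} [Fintype n] [DecidableEq n] (B : Matrix n n ℂ)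
    (h : (Bᴴ * B) * (Bᴴ * B) = Bᴴ * B) (h1 : (Bᴴ * B).trace = 1) : traceNorm B = 1 := by
  obtain ⟨V, l, hV, e1, e2, hl, hB, ht⟩ := traceNorm_data B
  have hD : diagonal (fun i => (l i : ℂ)) = Vᴴ * (Bᴴ * B) * V := by
    rw [hB]
    calc _ = (Vᴴ * V) * diagonal (fun i => (l i : ℂ)) * (Vᴴ * V) := by
          rw [e1, Matrix.one_mul, Matrix.mul_one]
      _ = _ := by simp only [Matrix.mul_assoc]
  have hDD : diagonal (fun i => (l i : ℂ)) * diagonal (fun i => (l i : ℂ))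
      = diagonal (fun i => (l i : ℂ)) := by
    rw [hD]
    calc _ = Vᴴ * (Bᴴ * B) * (V * Vᴴ) * (Bᴴ * B) * V := by simp only [Matrix.mul_assoc]
      _ = Vᴴ * ((Bᴴ * B) * (Bᴴ * B)) * V := by
        rw [e2, Matrix.mul_one]; simp only [Matrix.mul_assoc]
      _ = _ := by rw [h]
  have hi : ∀ i, Real.sqrt (l i) = l i := by
    intro i
    rw [diagonal_mul_diagonal] at hDD
    have := congrFun (diagonal_injective hDD) i
    have h3 : l i * l i = l i := by exact_mod_cast this
    conv_lhs => rw [← h3]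
    exact Real.sqrt_mul_self (hl i)
  rw [ht, Finset.sum_congr rfl fun i _ => hi i]
  have : (diagonal (fun i => (l i : ℂ))).trace = 1 := by
    rw [hD, Matrix.mul_assoc, trace_mul_comm, Matrix.mul_assoc, e2, Matrix.mul_one, h1]
  rw [trace_diagonal] at this
  exact_mod_cast this

lemma traceNorm_fin_one (B : Matrix (Fin 1) (Fin 1) ℂ) : traceNorm B = ‖B 0 0‖ := by
  have h := (Matrix.posSemidef_conjTranspose_mul_self B).isHermitian.trace_eq_sum_eigenvalues
  simp only [Matrix.trace, Matrix.diag_apply, Matrix.mul_apply, Fin.sum_univ_one,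
    conjTranspose_apply] at h
  have h2 : star (B 0 0) * B 0 0 = ((‖B 0 0‖ ^ 2 : ℝ) : ℂ) := by
    push_cast; rw [← Complex.conj_mul']; rfl
  rw [h2] at h
  have h3 : ‖B 0 0‖ ^ 2 =
      (Matrix.posSemidef_conjTranspose_mul_self B).isHermitian.eigenvalues 0 :=
    Complex.ofReal_injective h
  unfold traceNorm
  rw [Fin.sum_univ_one, ← h3, Real.sqrt_sq (norm_nonneg _)]

/-- The rank-one operator with `‖(Φ ⊗ id)(ξ)‖₁ = ‖A v‖` for a unit vector `v`. -/
lemma exists_rank_one {dx : ℕ} (A : Matrix (Fin dx) (Fin dx) ℂ)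
    (u v : EuclideanSpace ℂ (Fin dx)) (hu : ‖u‖ = 1) (hv : ‖v‖ = 1) :
    ∃ ξ : Matrix (Fin dx × Fin 1) (Fin dx × Fin 1) ℂ, traceNorm ξ = 1 ∧
      traceNorm (phiTensorIdApply A ξ) = ‖inner ℂ u (Matrix.toEuclideanCLM (𝕜 := ℂ) A v)‖ := by
  have hn : ∀ w : EuclideanSpace ℂ (Fin dx), ‖w‖ = 1 → ∑ x, star (w x) * w x = 1 := by
    intro w hw
    have h := EuclideanSpace.norm_sq_eq w
    rw [hw] at h
    have h' : ((1 ^ 2 : ℝ) : ℂ) = ((∑ i, ‖w i‖ ^ 2 : ℝ) : ℂ) := by rw [h]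
    push_cast at h'
    rw [one_pow] at h'
    rw [h']
    refine Finset.sum_congr rfl fun x _ => ?_
    rw [← Complex.conj_mul']; rfl
  set ξ : Matrix (Fin dx × Fin 1) (Fin dx × Fin 1) ℂ :=
    Matrix.of fun p q => u p.1 * star (v q.1) with hξ
  have hP : ξᴴ * ξ = Matrix.of fun p q => v p.1 * star (v q.1) := by
    ext p q
    simp only [hξ, Matrix.mul_apply, conjTranspose_apply, Matrix.of_apply, Fintype.sum_prod_type,
      Fin.sum_univ_one, star_mul', star_star]
    calc _ = (∑ x, star (u x) * u x) * (v p.1 * star (v q.1)) := by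
          rw [Finset.sum_mul]; exact Finset.sum_congr rfl fun x _ => by ring
      _ = _ := by rw [hn u hu, one_mul]
  refine ⟨ξ, traceNorm_of_idem ξ ?_ ?_, ?_⟩
  · rw [hP]
    ext p q
    simp only [Matrix.mul_apply, Matrix.of_apply, Fintype.sum_prod_type, Fin.sum_univ_one]
    calc _ = (∑ x, star (v x) * v x) * (v p.1 * star (v q.1)) := by
          rw [Finset.sum_mul]; exact Finset.sum_congr rfl fun x _ => by ring
      _ = _ := by rw [hn v hv, one_mul]
  · rw [hP]
    simp only [Matrix.trace, Matrix.diag_apply, Matrix.of_apply, Fintype.sum_prod_type,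
      Fin.sum_univ_one]
    rw [← hn v hv]
    exact Finset.sum_congr rfl fun x _ => mul_comm _ _
  · rw [traceNorm_fin_one, ← norm_star (inner ℂ _ _)]
    congr 1
    simp only [phiTensorIdApply, Matrix.of_apply, hξ, PiLp.inner_apply, RCLike.inner_apply,
      Matrix.ofLp_toEuclideanCLM, Matrix.mulVec, dotProduct, star_sum, star_mul', Finset.sum_mul]
    refine Finset.sum_congr rfl fun x' _ => Finset.sum_congr rfl fun x _ => ?_
    rw [← starRingEnd_apply, ← starRingEnd_apply, ← starRingEnd_apply (_ : ℂ), Complex.conj_conj]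
    ring

end TraceNormAux

/-- For `Φ : L(X) → L(Y)` with `dim Y = 1`, represented by `Φ(X) = ⟨A, X⟩ = tr(Aᴴ X)`,
the diamond norm of `Φ` — the supremum over finite-dimensional `W` and operators `ξ` on
`X ⊗ W` of unit trace norm of `‖(Φ ⊗ id_W)(ξ)‖₁` — equals the operator norm `‖A‖`. -/
theorem diamondNorm_of_functional {dx : ℕ} (A : Matrix (Fin dx) (Fin dx) ℂ) :
    sSup {r : ℝ | ∃ (dw : ℕ) (ξ : Matrix (Fin dx × Fin dw) (Fin dx × Fin dw) ℂ),
        traceNorm ξ = 1 ∧ r = traceNorm (phiTensorIdApply A ξ)} = opNorm A := by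
  have hb : ∀ r ∈ {r : ℝ | ∃ (dw : ℕ) (ξ : Matrix (Fin dx × Fin dw) (Fin dx × Fin dw) ℂ),
        traceNorm ξ = 1 ∧ r = traceNorm (phiTensorIdApply A ξ)}, r ≤ opNorm A := by
    rintro r ⟨dw, ξ, h1, rfl⟩
    have := phi_le A ξ
    rwa [h1, mul_one] at this
  have h0 : 0 ≤ opNorm A := norm_nonneg _
  refine le_antisymm (Real.sSup_le hb h0) ?_
  refine ContinuousLinearMap.opNorm_le_bound _ (Real.sSup_nonneg ?_) fun v => ?_
  · rintro r ⟨dw, ξ, h1, rfl⟩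
    exact traceNorm_nonneg' _
  set T := Matrix.toEuclideanCLM (𝕜 := ℂ) A with hT
  have hS : 0 ≤ sSup {r : ℝ | ∃ (dw : ℕ) (ξ : Matrix (Fin dx × Fin dw) (Fin dx × Fin dw) ℂ),
        traceNorm ξ = 1 ∧ r = traceNorm (phiTensorIdApply A ξ)} := by
    refine Real.sSup_nonneg ?_
    rintro r ⟨dw, ξ, h1, rfl⟩
    exact traceNorm_nonneg' _
  by_cases hTv : T v = 0
  · rw [hTv, norm_zero]; positivity
  have hv : v ≠ 0 := by rintro rfl; exact hTv (map_zero T)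
  have hTv' : ‖T v‖ ≠ 0 := norm_ne_zero_iff.2 hTv
  have hv' : ‖v‖ ≠ 0 := norm_ne_zero_iff.2 hv
  obtain ⟨ξ, h1, h2⟩ := exists_rank_one A (((‖T v‖ : ℂ)⁻¹) • T v) (((‖v‖ : ℂ)⁻¹) • v)
    (by rw [norm_smul, norm_inv, Complex.norm_real, norm_norm, inv_mul_cancel₀ hTv'])
    (by rw [norm_smul, norm_inv, Complex.norm_real, norm_norm, inv_mul_cancel₀ hv'])
  have h3 := le_csSup ⟨opNorm A, hb⟩ (Set.mem_ofPred.2 ⟨1, ξ, h1, rfl⟩)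
  rw [h2, ← hT, map_smul, inner_smul_left, inner_smul_right, inner_self_eq_norm_sq_to_K] at h3
  simp only [norm_mul, RCLike.norm_conj, norm_inv, Complex.norm_real, norm_norm, norm_pow,
    Complex.coe_algebraMap, RCLike.norm_ofReal, abs_norm] at h3
  rw [← div_le_iff₀ (by positivity)]
  refine le_trans (le_of_eq ?_) h3
  field_simp
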